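/- For every ε > 0 there exists a constant C(ε) > 0 with the following property: let p be an odd prime, n ≥ 1 an integer, q := pⁿ, β₁, β₂, β₃ integers coprime to p, and M a real number with 1 ≤ M ≤ q^{1/2−ε}. Suppose γ ∈ ℤ satisfies γβ₂ ≡ β₁ (mod q), and suppose a ∈ ℤ and r ∈ ℕ with gcd(a,r) = 1 satisfy |γ/q − a/r| ≤ 1/r². Then Σ_{β₁,β₂,β₃}(M,q) ≤ C(ε) · (M^{5/2}q^{−1/2} + r^{1/2}M^{3/2}q^{−1/2} + M^{3/2}r^{−1/2} + M) · (rMq)^ε. -/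

import Mathlib

/-- `Σ_{β₁,β₂,β₃}(M,q)`: the number of triples `(x₁,x₂,x₃) ∈ ℤ³` with
`|x₁|,|x₂|,|x₃| ≤ M`, `p ∤ x₁x₂x₃` and `β₁x₁² + β₂x₂² + β₃x₃² ≡ 0 (mod q)`. -/
noncomputable def sigmaCount (p : ℕ) (β₁ β₂ β₃ : ℤ) (M : ℝ) (q : ℕ) : ℕ :=
  Nat.card {x : ℤ × ℤ × ℤ |
    ((|x.1| : ℤ) : ℝ) ≤ M ∧ ((|x.2.1| : ℤ) : ℝ) ≤ M ∧ ((|x.2.2| : ℤ) : ℝ) ≤ M ∧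
    ¬ (p : ℤ) ∣ x.1 * x.2.1 * x.2.2 ∧
    (q : ℤ) ∣ β₁ * x.1 ^ 2 + β₂ * x.2.1 ^ 2 + β₃ * x.2.2 ^ 2}

/-!
Cauchy–Schwarz over the value of `x₃` reduces the count to pairs of solutions `x`, `y` with
`x₃ = y₃`. For such a pair put `m = x₁² - y₁²` and `l = x₂² - y₂²`; then `γ m + l ≡ 0 (mod q)` and
`|m|, |l| ≤ M² < q`. Either `m = l = 0`, so that `y` is `x` up to signs, or `m` and `l` are both
nonzero, and then the divisor bound leaves `≪ M ^ ε` possibilities for the pair given `(m, l)`. To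
count the `(m, l)`, write `γ m + l = q k` and cut the range of `m` into blocks of length `r`. As `m`
runs through a block, `a m - k r` stays in an interval of length `≪ 1 + r M² / q` and determines
`(m, l)`, because `a` is invertible modulo `r`.
-/

open Finset

/-! ### The divisor bound -/

theorem add_one_le_mul_pow {R : Type*} [Field R] [LinearOrder R] [IsStrictOrderedRing R]
    {t y : R} (ht : 0 < t) (hy : 1 + t ≤ y) (e : ℕ) : (e : R) + 1 ≤ (1 + 1 / t) * y ^ e := by
  have bernoulli : 1 + (e : R) * t ≤ y ^ e :=
    (one_add_mul_le_pow (by linarith) e).trans (pow_le_pow_left₀ (by positivity) hy e)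
  calc (e : R) + 1 ≤ (e + 1) + (1 / t + e * t) := le_add_of_nonneg_right (by positivity)
    _ = (1 + 1 / t) * (1 + e * t) := by field_simp; ring
    _ ≤ (1 + 1 / t) * y ^ e := by gcongr

theorem add_one_le_pow_of_two_le {R : Type*} [CommRing R] [LinearOrder R] [IsStrictOrderedRing R]
    {y : R} (hy : 2 ≤ y) (e : ℕ) : (e : R) + 1 ≤ y ^ e :=
  calc (e : R) + 1 ≤ 2 ^ e := by exact_mod_cast Nat.lt_two_pow_self
    _ ≤ y ^ e := by gcongr

theorem natCast_rpow_eq_prod_primeFactors {n : ℕ} (hn : n ≠ 0) (δ : ℝ) :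
    (n : ℝ) ^ δ = ∏ p ∈ n.primeFactors, ((p : ℝ) ^ δ) ^ n.factorization p := by
  conv_lhs => rw [← Nat.prod_factorization_pow_eq_self hn, Finsupp.prod, Nat.cast_prod]
  rw [← Real.finsetProd_rpow _ _ fun _ _ => by positivity, Nat.support_factorization]
  refine prod_congr rfl fun p _ => ?_
  rw [Nat.cast_pow, Real.rpow_pow_comm (by positivity)]

theorem exists_card_divisors_le_rpow {δ : ℝ} (hδ : 0 < δ) :
    ∃ C : ℝ, 0 < C ∧ ∀ n : ℕ, (#n.divisors : ℝ) ≤ C * (n : ℝ) ^ δ := by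
  set t : ℝ := 2 ^ δ - 1 with ht_def
  set B : ℝ := 1 + 1 / t
  -- `X` is the threshold beyond which `p ^ δ ≥ 2`, so larger primes contribute no constant.
  set X : ℕ := ⌈(2 : ℝ) ^ δ⁻¹⌉₊
  have ht : 0 < t := sub_pos.mpr (Real.one_lt_rpow one_lt_two hδ)
  have hB : 1 ≤ B := le_add_of_nonneg_right (by positivity)
  have prime_power_bound {p : ℕ} (hp : p.Prime) (e : ℕ) :
      ((e + 1 : ℕ) : ℝ) ≤ (if p < X then B else 1) * ((p : ℝ) ^ δ) ^ e := by
    push_cast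
    split_ifs with hpX
    · refine add_one_le_mul_pow ht ?_ e
      rw [ht_def, add_sub_cancel]
      exact Real.rpow_le_rpow zero_le_two (by exact_mod_cast hp.two_le) hδ.le
    · rw [one_mul]
      refine add_one_le_pow_of_two_le ?_ e
      rw [← Real.rpow_inv_le_iff_of_pos zero_le_two (by positivity) hδ]
      exact (Nat.le_ceil _).trans (by exact_mod_cast not_lt.mp hpX)
  have small_primes_bound (n : ℕ) : ∏ p ∈ n.primeFactors, (if p < X then B else 1) ≤ B ^ X := by
    rw [← prod_filter, prod_const]
    refine pow_le_pow_right₀ hB ?_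
    calc #{p ∈ n.primeFactors | p < X} ≤ #(range X) :=
          card_le_card fun p hp => mem_range.mpr (mem_filter.mp hp).2
      _ = X := card_range X
  refine ⟨B ^ X, by positivity, fun n => ?_⟩
  rcases eq_or_ne n 0 with rfl | hn
  · rw [Nat.divisors_zero, card_empty, Nat.cast_zero]
    positivity
  calc (#n.divisors : ℝ) = ∏ p ∈ n.primeFactors, ((n.factorization p + 1 : ℕ) : ℝ) := by
        rw [Nat.card_divisors hn, Nat.cast_prod]
    _ ≤ ∏ p ∈ n.primeFactors, (if p < X then B else 1) * ((p : ℝ) ^ δ) ^ n.factorization p :=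
        prod_le_prod (fun _ _ => by positivity) fun p hp =>
          prime_power_bound (Nat.prime_of_mem_primeFactors hp) _
    _ ≤ B ^ X * (n : ℝ) ^ δ := by
        rw [prod_mul_distrib, natCast_rpow_eq_prod_primeFactors hn]
        exact mul_le_mul_of_nonneg_right (small_primes_bound n)
          (prod_nonneg fun _ _ => by positivity)

/-! ### Small solutions of a linear congruence -/

/-- The solutions of the linear congruence `γ m + l ≡ 0 (mod q)` in the box
`|m| ≤ X`, `|l| ≤ Y`. -/
noncomputable def congruencePairs (X Y q : ℕ) (γ : ℤ) : Finset (ℤ × ℤ) :=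
  {x ∈ Icc (-X : ℤ) X ×ˢ Icc (-Y : ℤ) Y | (q : ℤ) ∣ γ * x.1 + x.2}

/-- The numerator `a m - k r` of `(a / r) m - k`, where `k` is the quotient in `γ m + l = q k`,
attached to a solution `(m, l)` of `γ m + l ≡ 0 (mod q)`. The division is exact only for such
solutions. -/
def approxNumerator (q : ℕ) (γ a : ℤ) (r : ℕ) (x : ℤ × ℤ) : ℤ :=
  a * x.1 - (γ * x.1 + x.2) / q * r

theorem card_Icc_ceil_floor_le {R : Type*} [CommRing R] [LinearOrder R] [IsStrictOrderedRing R]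
    [FloorRing R] {x y : R} (h : x ≤ y) : (#(Icc ⌈x⌉ ⌊y⌋) : R) ≤ y - x + 1 := by
  rw [Int.card_Icc]
  rcases le_total 0 (⌊y⌋ + 1 - ⌈x⌉) with hnonneg | hnonpos
  · rw [← Int.cast_natCast, Int.toNat_of_nonneg hnonneg]
    push_cast
    linarith [Int.floor_le y, Int.le_ceil x]
  · rw [Int.toNat_of_nonpos hnonpos, Nat.cast_zero]
    linarith

section LinearCongruence

variable {X Y q r : ℕ} {γ a : ℤ} {x y : ℤ × ℤ}

theorem mem_congruencePairs :
    x ∈ congruencePairs X Y q γ ↔ |x.1| ≤ X ∧ |x.2| ≤ Y ∧ (q : ℤ) ∣ γ * x.1 + x.2 := by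
  simp only [congruencePairs, mem_filter, mem_product, mem_Icc, abs_le, and_assoc]

theorem ediv_mem_Icc_of_abs_le {m : ℤ} (hm : |m| ≤ X) :
    m / r ∈ Icc ⌈-(X : ℝ) / r - 1⌉ ⌊(X : ℝ) / r⌋ := by
  obtain ⟨hlower, hupper⟩ := abs_le.mp (show |(m : ℝ)| ≤ X by exact_mod_cast hm)
  have hfloor : m / r = ⌊(m : ℝ) / r⌋ := by rw [Int.floor_div_natCast, Int.floor_intCast]
  rw [hfloor, mem_Icc, Int.ceil_le]
  constructor
  · have := Int.sub_one_lt_floor ((m : ℝ) / r)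
    have : -(X : ℝ) / r ≤ m / r := by gcongr
    linarith
  · exact Int.floor_le_floor (by gcongr)

theorem abs_approxNumerator_add_le (hq : 0 < q) (hr : 0 < r)
    (happ : |(γ : ℝ) / q - a / r| ≤ 1 / (r : ℝ) ^ 2) (hx : x ∈ congruencePairs X Y q γ) :
    |(approxNumerator q γ a r x : ℝ) + r * (γ / q - a / r) * ((x.1 / r : ℤ) * r)| ≤
      1 + r * Y / q := by
  obtain ⟨m, l⟩ := x
  obtain ⟨-, hl, k, hk⟩ := mem_congruencePairs.mp hx
  have hrZ : (0 : ℤ) < r := by exact_mod_cast hr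
  have hrR : (0 : ℝ) < r := by exact_mod_cast hr
  have hqR : (0 : ℝ) < q := by exact_mod_cast hq
  have hlR : |(l : ℝ)| ≤ Y := by exact_mod_cast hl
  have hkR : (γ : ℝ) * m + l = q * k := by exact_mod_cast hk
  have hmod : ((m % r : ℤ) : ℝ) + r * (m / r : ℤ) = m := by
    exact_mod_cast Int.emod_add_mul_ediv m r
  have hmod_nonneg : (0 : ℝ) ≤ (m % r : ℤ) := by exact_mod_cast Int.emod_nonneg m hrZ.ne'
  have hmod_le : ((m % r : ℤ) : ℝ) ≤ r := by exact_mod_cast (Int.emod_lt_of_pos m hrZ).le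
  have hdecomp : (approxNumerator q γ a r (m, l) : ℝ) + r * (γ / q - a / r) * ((m / r : ℤ) * r) =
      -(r * (γ / q - a / r) * (m % r : ℤ) + r * l / q) := by
    have hquot : (γ * m + l) / (q : ℤ) = k := by
      rw [hk, Int.mul_ediv_cancel_left _ (by exact_mod_cast hq.ne')]
    have hl_eq : (l : ℝ) = q * k - γ * m := by linarith
    simp only [approxNumerator, hquot]
    push_cast
    rw [hl_eq, ← hmod]
    field_simp
    ring
  rw [hdecomp, abs_neg]
  refine (abs_add_le _ _).trans (add_le_add ?_ ?_)
  · rw [abs_mul, abs_mul, abs_of_pos hrR, abs_of_nonneg hmod_nonneg]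
    calc r * |(γ : ℝ) / q - a / r| * (m % r : ℤ) ≤ r * (1 / (r : ℝ) ^ 2) * r := by gcongr
      _ = 1 := by field_simp
  · rw [abs_div, abs_mul, abs_of_pos hrR, abs_of_pos hqR]
    gcongr

theorem eq_of_approxNumerator_eq (hr : 0 < r) (hcop : IsCoprime (r : ℤ) a)
    (hx : x ∈ congruencePairs X Y q γ) (hy : y ∈ congruencePairs X Y q γ)
    (hblock : x.1 / r = y.1 / r)
    (hnum : approxNumerator q γ a r x = approxNumerator q γ a r y) : x = y := by
  obtain ⟨m, l⟩ := x
  obtain ⟨m', l'⟩ := y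
  have hk := Int.ediv_mul_cancel (mem_congruencePairs.mp hx).2.2
  have hk' := Int.ediv_mul_cancel (mem_congruencePairs.mp hy).2.2
  simp only [approxNumerator] at hblock hnum hk hk'
  set k := (γ * m + l) / (q : ℤ)
  set k' := (γ * m' + l') / (q : ℤ)
  have hdvd : (r : ℤ) ∣ m - m' := hcop.dvd_of_dvd_mul_left ⟨k - k', by linarith⟩
  obtain rfl : m = m' := by
    rw [← Int.emod_add_mul_ediv m r, ← Int.emod_add_mul_ediv m' r, hblock,
      Int.emod_eq_emod_iff_emod_sub_eq_zero.mpr (Int.emod_eq_zero_of_dvd hdvd)]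
  have hkk' : k = k' := mul_right_cancel₀ (by exact_mod_cast hr.ne' : (r : ℤ) ≠ 0) (by linarith)
  rw [← hkk'] at hk'
  exact Prod.ext rfl (by linarith)

theorem card_filter_congruencePairs_ediv_eq_le (hq : 0 < q) (hr : 0 < r)
    (hcop : IsCoprime (r : ℤ) a) (happ : |(γ : ℝ) / q - a / r| ≤ 1 / (r : ℝ) ^ 2) (j : ℤ) :
    (#{x ∈ congruencePairs X Y q γ | x.1 / r = j} : ℝ) ≤ 2 * r * Y / q + 3 := by
  set c : ℝ := r * (γ / q - a / r) * (j * r)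
  set R : ℝ := 1 + r * Y / q with hR
  have hcard : #{x ∈ congruencePairs X Y q γ | x.1 / r = j} ≤ #(Icc ⌈-c - R⌉ ⌊-c + R⌋) := by
    refine card_le_card_of_injOn (approxNumerator q γ a r) (fun x hx => ?_)
      fun x hx y hy hxy => ?_
    · obtain ⟨hmem, rfl⟩ := mem_filter.mp hx
      obtain ⟨hlower, hupper⟩ := abs_le.mp (abs_approxNumerator_add_le hq hr happ hmem)
      exact mem_Icc.mpr ⟨Int.ceil_le.mpr (by linarith), Int.le_floor.mpr (by linarith)⟩
    · obtain ⟨hx, hxj⟩ := mem_filter.mp hx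
      obtain ⟨hy, hyj⟩ := mem_filter.mp hy
      exact eq_of_approxNumerator_eq hr hcop hx hy (hxj.trans hyj.symm) hxy
  calc (#{x ∈ congruencePairs X Y q γ | x.1 / r = j} : ℝ)
      ≤ #(Icc ⌈-c - R⌉ ⌊-c + R⌋) := by exact_mod_cast hcard
    _ ≤ (-c + R) - (-c - R) + 1 :=
        card_Icc_ceil_floor_le (by linarith [show 0 ≤ R by positivity])
    _ = 2 * r * Y / q + 3 := by rw [hR]; ring

theorem card_congruencePairs_le (hq : 0 < q) (hr : 0 < r)
    (hcop : IsCoprime (r : ℤ) a) (happ : |(γ : ℝ) / q - a / r| ≤ 1 / (r : ℝ) ^ 2) :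
    (#(congruencePairs X Y q γ) : ℝ) ≤ (2 * X / r + 2) * (2 * r * Y / q + 3) := by
  set J := Icc ⌈-(X : ℝ) / r - 1⌉ ⌊(X : ℝ) / r⌋
  have hJ : (#J : ℝ) ≤ 2 * X / r + 2 := by
    refine (card_Icc_ceil_floor_le ?_).trans_eq (by ring)
    rw [neg_div]
    linarith [show 0 ≤ (X : ℝ) / r by positivity]
  calc (#(congruencePairs X Y q γ) : ℝ)
      = ∑ j ∈ J, (#{x ∈ congruencePairs X Y q γ | x.1 / r = j} : ℝ) := by
        rw [card_eq_sum_card_fiberwise fun x hx =>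
          ediv_mem_Icc_of_abs_le (mem_congruencePairs.mp hx).1, Nat.cast_sum]
    _ ≤ #J • (2 * r * Y / q + 3 : ℝ) := sum_le_card_nsmul _ _ _ fun j _ =>
        card_filter_congruencePairs_ediv_eq_le hq hr hcop happ j
    _ ≤ (2 * X / r + 2) * (2 * r * Y / q + 3) := by
        rw [nsmul_eq_mul]
        gcongr

end LinearCongruence

/-! ### Counting solutions through their coincidences -/

theorem sq_card_le_card_mul_card_filter_eq {α β : Type*} [DecidableEq β] {s : Finset α}
    {t : Finset β} {f : α → β} (hf : ∀ x ∈ s, f x ∈ t) :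
    #s ^ 2 ≤ #t * #{x ∈ s ×ˢ s | f x.1 = f x.2} := by
  have hpairs : #{x ∈ s ×ˢ s | f x.1 = f x.2} = ∑ b ∈ t, #{x ∈ s | f x = b} ^ 2 := by
    rw [card_eq_sum_card_fiberwise (f := fun x => f x.1) (t := t)
      fun x hx => hf _ (mem_product.mp (mem_filter.mp hx).1).1]
    refine sum_congr rfl fun b _ => ?_
    rw [sq, ← card_product]
    congr 1
    grind
  rw [hpairs, card_eq_sum_card_fiberwise hf]
  exact sq_sum_le_card_mul_sum_sq

theorem card_filter_sq_sub_sq_eq_le (s : Finset (ℤ × ℤ)) {m : ℤ} (hm : m ≠ 0) :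
    #{x ∈ s | x.1 ^ 2 - x.2 ^ 2 = m} ≤ 2 * #m.natAbs.divisors := by
  have hcard : #m.divisors = 2 * #m.natAbs.divisors := by
    simp only [Int.divisors, card_disjUnion, card_map, two_mul]
  rw [← hcard]
  refine card_le_card_of_injOn (fun x => x.1 - x.2) (fun x hx => ?_) fun x hx y hy hxy => ?_
  · obtain ⟨-, rfl⟩ := mem_filter.mp hx
    exact Int.mem_divisors.mpr ⟨sub_dvd_pow_sub_pow _ _ 2, hm⟩
  · replace hx := (mem_filter.mp hx).2
    replace hy := (mem_filter.mp hy).2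
    have hsub : x.1 - x.2 = y.1 - y.2 := hxy
    have hne : x.1 - x.2 ≠ 0 := fun h0 => hm (by linear_combination (x.1 + x.2) * h0 - hx)
    have hadd : x.1 + x.2 = y.1 + y.2 :=
      mul_left_cancel₀ hne (by linear_combination hx - hy - (y.1 + y.2) * hsub)
    ext <;> linarith

theorem abs_sq_sub_sq_le_sq {R : Type*} [CommRing R] [LinearOrder R] [IsStrictOrderedRing R]
    {x y c : R} (hx : |x| ≤ c) (hy : |y| ≤ c) :
    |x ^ 2 - y ^ 2| ≤ c ^ 2 :=
  abs_sub_le_of_nonneg_of_le (sq_nonneg x) (sq_le_sq' (abs_le.mp hx).1 (abs_le.mp hx).2)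
    (sq_nonneg y) (sq_le_sq' (abs_le.mp hy).1 (abs_le.mp hy).2)

theorem sq_eq_sq_of_dvd_mul_sq_sub_sq {q β x y c : ℤ} (hcq : c ^ 2 < q) (hβ : IsCoprime q β)
    (hx : |x| ≤ c) (hy : |y| ≤ c) (h : q ∣ β * (x ^ 2 - y ^ 2)) : x ^ 2 = y ^ 2 :=
  sub_eq_zero.mp <| Int.eq_zero_of_abs_lt_dvd (hβ.dvd_of_dvd_mul_left h)
    ((abs_sq_sub_sq_le_sq hx hy).trans_lt hcq)

theorem card_filter_dvd_add_mul_sq_le_two {N q : ℕ} {β : ℤ} (hNq : N ^ 2 < q)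
    (hβ : IsCoprime (q : ℤ) β) (c : ℤ) :
    #{z ∈ Icc (-N : ℤ) N | (q : ℤ) ∣ c + β * z ^ 2} ≤ 2 := by
  obtain hempty | ⟨w, hw⟩ := ({z ∈ Icc (-N : ℤ) N | (q : ℤ) ∣ c + β * z ^ 2}).eq_empty_or_nonempty
  · simp only [hempty, card_empty, zero_le]
  obtain ⟨hwN, hwq⟩ := mem_filter.mp hw
  refine (card_le_card fun z hz => ?_).trans (card_le_two (a := w) (b := -w))
  obtain ⟨hzN, hzq⟩ := mem_filter.mp hz
  have hdvd : (q : ℤ) ∣ β * (z ^ 2 - w ^ 2) := by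
    have hdiff := dvd_sub hzq hwq
    rwa [add_sub_add_left_eq_sub, ← mul_sub] at hdiff
  have hsq := sq_eq_sq_of_dvd_mul_sq_sub_sq (by exact_mod_cast hNq) hβ
    (abs_le.mpr (mem_Icc.mp hzN)) (abs_le.mpr (mem_Icc.mp hwN)) hdvd
  simpa only [mem_insert, mem_singleton] using sq_eq_sq_iff_eq_or_eq_neg.mp hsq

/-- The solutions of `β₁x₁² + β₂x₂² + β₃x₃² ≡ 0 (mod q)` in the box `[-N, N]³`; unlike in
`sigmaCount`, coordinates sharing a factor with `q` are allowed. -/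
noncomputable def solutionTriples (N q : ℕ) (β₁ β₂ β₃ : ℤ) : Finset (ℤ × ℤ × ℤ) :=
  {x ∈ Icc (-N : ℤ) N ×ˢ Icc (-N : ℤ) N ×ˢ Icc (-N : ℤ) N |
    (q : ℤ) ∣ β₁ * x.1 ^ 2 + β₂ * x.2.1 ^ 2 + β₃ * x.2.2 ^ 2}

/-- The pairs `(x, y)` of solutions with `x₃ = y₃`, which form the second moment of the number of
solutions with prescribed third coordinate. -/
noncomputable def solutionPairs (N q : ℕ) (β₁ β₂ β₃ : ℤ) : Finset ((ℤ × ℤ × ℤ) × ℤ × ℤ × ℤ) :=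
  {x ∈ solutionTriples N q β₁ β₂ β₃ ×ˢ solutionTriples N q β₁ β₂ β₃ | x.1.2.2 = x.2.2.2}

/-- The pair `(x₁² - y₁², x₂² - y₂²)`, which solves a linear congruence modulo `q` when `(x, y)` is
in `solutionPairs`. -/
def sqDiffs (x : (ℤ × ℤ × ℤ) × ℤ × ℤ × ℤ) : ℤ × ℤ :=
  (x.1.1 ^ 2 - x.2.1 ^ 2, x.1.2.1 ^ 2 - x.2.2.1 ^ 2)

section SolutionPairs

variable {N q : ℕ} {β₁ β₂ β₃ : ℤ}

theorem mem_solutionTriples {x : ℤ × ℤ × ℤ} :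
    x ∈ solutionTriples N q β₁ β₂ β₃ ↔ |x.1| ≤ N ∧ |x.2.1| ≤ N ∧ |x.2.2| ≤ N ∧
      (q : ℤ) ∣ β₁ * x.1 ^ 2 + β₂ * x.2.1 ^ 2 + β₃ * x.2.2 ^ 2 := by
  simp only [solutionTriples, mem_filter, mem_product, mem_Icc, abs_le, and_assoc]

theorem mem_solutionPairs {x : (ℤ × ℤ × ℤ) × ℤ × ℤ × ℤ} :
    x ∈ solutionPairs N q β₁ β₂ β₃ ↔ x.1 ∈ solutionTriples N q β₁ β₂ β₃ ∧
      x.2 ∈ solutionTriples N q β₁ β₂ β₃ ∧ x.1.2.2 = x.2.2.2 := by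
  simp only [solutionPairs, mem_filter, mem_product, and_assoc]

theorem sq_card_solutionTriples_le_mul_card_solutionPairs :
    #(solutionTriples N q β₁ β₂ β₃) ^ 2 ≤ (2 * N + 1) * #(solutionPairs N q β₁ β₂ β₃) := by
  have hIcc : #(Icc (-N : ℤ) N) = 2 * N + 1 := by
    rw [Int.card_Icc]
    omega
  rw [← hIcc]
  exact sq_card_le_card_mul_card_filter_eq (f := fun x => x.2.2) fun x hx =>
    mem_Icc.mpr (abs_le.mp (mem_solutionTriples.mp hx).2.2.1)

theorem dvd_of_mem_solutionPairs {x : (ℤ × ℤ × ℤ) × ℤ × ℤ × ℤ}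
    (hx : x ∈ solutionPairs N q β₁ β₂ β₃) :
    (q : ℤ) ∣ β₁ * (x.1.1 ^ 2 - x.2.1 ^ 2) + β₂ * (x.1.2.1 ^ 2 - x.2.2.1 ^ 2) := by
  obtain ⟨hx₁, hx₂, hlast⟩ := mem_solutionPairs.mp hx
  have hdvd := dvd_sub (mem_solutionTriples.mp hx₁).2.2.2 (mem_solutionTriples.mp hx₂).2.2.2
  rwa [hlast, add_sub_add_right_eq_sub, add_sub_add_comm, ← mul_sub, ← mul_sub] at hdvd

theorem sq_eq_sq_iff_of_mem_solutionPairs {x : (ℤ × ℤ × ℤ) × ℤ × ℤ × ℤ} (hNq : N ^ 2 < q)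
    (h₁ : IsCoprime (q : ℤ) β₁) (h₂ : IsCoprime (q : ℤ) β₂)
    (hx : x ∈ solutionPairs N q β₁ β₂ β₃) :
    x.1.1 ^ 2 = x.2.1 ^ 2 ↔ x.1.2.1 ^ 2 = x.2.2.1 ^ 2 := by
  obtain ⟨hx₁, hx₂, -⟩ := mem_solutionPairs.mp hx
  rw [mem_solutionTriples] at hx₁ hx₂
  have hdvd := dvd_of_mem_solutionPairs hx
  have hNq' : (N : ℤ) ^ 2 < q := by exact_mod_cast hNq
  constructor <;> intro h
  · rw [h, sub_self, mul_zero, zero_add] at hdvd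
    exact sq_eq_sq_of_dvd_mul_sq_sub_sq hNq' h₂ hx₁.2.1 hx₂.2.1 hdvd
  · rw [h, sub_self, mul_zero, add_zero] at hdvd
    exact sq_eq_sq_of_dvd_mul_sq_sub_sq hNq' h₁ hx₁.1 hx₂.1 hdvd

theorem sqDiffs_mem_congruencePairs {x : (ℤ × ℤ × ℤ) × ℤ × ℤ × ℤ} {γ : ℤ}
    (h₂ : IsCoprime (q : ℤ) β₂) (hγ : (q : ℤ) ∣ γ * β₂ - β₁)
    (hx : x ∈ solutionPairs N q β₁ β₂ β₃) :
    sqDiffs x ∈ congruencePairs (N ^ 2) (N ^ 2) q γ := by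
  obtain ⟨hx₁, hx₂, -⟩ := mem_solutionPairs.mp hx
  rw [mem_solutionTriples] at hx₁ hx₂
  refine mem_congruencePairs.mpr ⟨?_, ?_, ?_⟩
  · exact_mod_cast abs_sq_sub_sq_le_sq hx₁.1 hx₂.1
  · exact_mod_cast abs_sq_sub_sq_le_sq hx₁.2.1 hx₂.2.1
  · refine h₂.dvd_of_dvd_mul_left ?_
    convert dvd_add (dvd_of_mem_solutionPairs hx) (hγ.mul_right (x.1.1 ^ 2 - x.2.1 ^ 2)) using 1
    simp only [sqDiffs]
    ring

theorem card_filter_solutionPairs_sq_eq_le (hNq : N ^ 2 < q)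
    (h₁ : IsCoprime (q : ℤ) β₁) (h₂ : IsCoprime (q : ℤ) β₂) :
    #{x ∈ solutionPairs N q β₁ β₂ β₃ | x.1.1 ^ 2 = x.2.1 ^ 2} ≤
      4 * #(solutionTriples N q β₁ β₂ β₃) := by
  refine card_le_mul_card_image_of_maps_to (f := Prod.fst)
    (fun x hx => (mem_solutionPairs.mp (mem_filter.mp hx).1).1) 4 fun b _ => ?_
  calc _ ≤ #((({b.1, -b.1} : Finset ℤ) ×ˢ ({b.2.1, -b.2.1} : Finset ℤ)).image
        fun z => (b, z.1, z.2, b.2.2)) := card_le_card ?_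
    _ ≤ 2 * 2 := by
        refine card_image_le.trans ?_
        rw [card_product]
        exact Nat.mul_le_mul card_le_two card_le_two
  rintro ⟨x, y⟩ hxy
  simp only [mem_filter] at hxy
  obtain ⟨⟨hxy, hfst⟩, rfl⟩ := hxy
  have hsnd := (sq_eq_sq_iff_of_mem_solutionPairs hNq h₁ h₂ hxy).mp hfst
  refine mem_image.mpr ⟨(y.1, y.2.1), ?_, ?_⟩
  · simp only [mem_product, mem_insert, mem_singleton]
    exact ⟨sq_eq_sq_iff_eq_or_eq_neg.mp hfst.symm, sq_eq_sq_iff_eq_or_eq_neg.mp hsnd.symm⟩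
  · rw [(mem_solutionPairs.mp hxy).2.2]

theorem card_filter_solutionPairs_coords_eq_le_two (hNq : N ^ 2 < q) (h₃ : IsCoprime (q : ℤ) β₃)
    (b : (ℤ × ℤ) × ℤ × ℤ) :
    #{x ∈ solutionPairs N q β₁ β₂ β₃ | ((x.1.1, x.2.1), x.1.2.1, x.2.2.1) = b} ≤ 2 := by
  refine (card_le_card_of_injOn (fun x => x.1.2.2) (fun x hx => ?_) fun x hx y hy hxy => ?_).trans
    (card_filter_dvd_add_mul_sq_le_two hNq h₃ (β₁ * b.1.1 ^ 2 + β₂ * b.2.1 ^ 2))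
  · simp only [mem_coe, mem_filter, mem_solutionPairs, mem_solutionTriples] at hx
    obtain ⟨⟨⟨-, -, hlast, hdvd⟩, -⟩, rfl⟩ := hx
    simp only [mem_coe, mem_filter, mem_Icc, ← abs_le]
    exact ⟨hlast, hdvd⟩
  · simp only [mem_coe, mem_filter, mem_solutionPairs] at hx hy hxy
    grind

theorem card_filter_sqDiffs_eq_le (hNq : N ^ 2 < q) (h₃ : IsCoprime (q : ℤ) β₃) {m l : ℤ}
    (hm : m ≠ 0) (hl : l ≠ 0) :
    #{x ∈ solutionPairs N q β₁ β₂ β₃ | sqDiffs x = (m, l)} ≤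
      8 * (#m.natAbs.divisors * #l.natAbs.divisors) := by
  set box := Icc (-N : ℤ) N ×ˢ Icc (-N : ℤ) N
  calc #{x ∈ solutionPairs N q β₁ β₂ β₃ | sqDiffs x = (m, l)}
      ≤ 2 * #({z ∈ box | z.1 ^ 2 - z.2 ^ 2 = m} ×ˢ {z ∈ box | z.1 ^ 2 - z.2 ^ 2 = l}) :=
        card_le_mul_card_image_of_maps_to
          (f := fun x => ((x.1.1, x.2.1), (x.1.2.1, x.2.2.1))) (fun x hx => ?mapsTo) 2
          fun b _ => ?fibre
    _ ≤ 2 * ((2 * #m.natAbs.divisors) * (2 * #l.natAbs.divisors)) := by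
        rw [card_product]
        gcongr
        exacts [card_filter_sq_sub_sq_eq_le _ hm, card_filter_sq_sub_sq_eq_le _ hl]
    _ = 8 * (#m.natAbs.divisors * #l.natAbs.divisors) := by ring
  case mapsTo =>
    simp only [mem_filter, mem_solutionPairs, mem_solutionTriples, sqDiffs, Prod.mk.injEq] at hx
    simp only [box, mem_product, mem_filter, mem_Icc, ← abs_le]
    tauto
  case fibre =>
    exact (card_le_card (filter_subset_filter _ (filter_subset _ _))).trans
      (card_filter_solutionPairs_coords_eq_le_two hNq h₃ b)

theorem card_filter_solutionPairs_sq_ne_le {γ : ℤ} {K : ℕ} (hNq : N ^ 2 < q)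
    (h₁ : IsCoprime (q : ℤ) β₁) (h₂ : IsCoprime (q : ℤ) β₂) (h₃ : IsCoprime (q : ℤ) β₃)
    (hγ : (q : ℤ) ∣ γ * β₂ - β₁) (hK : ∀ k ≤ N ^ 2, #k.divisors ≤ K) :
    #{x ∈ solutionPairs N q β₁ β₂ β₃ | ¬ x.1.1 ^ 2 = x.2.1 ^ 2} ≤
      8 * K ^ 2 * #(congruencePairs (N ^ 2) (N ^ 2) q γ) := by
  have hdiv {k : ℤ} (hkN : |k| ≤ (N ^ 2 : ℕ)) : #k.natAbs.divisors ≤ K :=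
    hK _ (by rwa [Int.abs_eq_natAbs, Nat.cast_le] at hkN)
  refine card_le_mul_card_image_of_maps_to (f := sqDiffs)
    (fun x hx => sqDiffs_mem_congruencePairs h₂ hγ (mem_filter.mp hx).1) _ fun b hb => ?_
  obtain hempty | ⟨w, hw⟩ := ({x ∈ {x ∈ solutionPairs N q β₁ β₂ β₃ | ¬ x.1.1 ^ 2 = x.2.1 ^ 2} |
    sqDiffs x = b}).eq_empty_or_nonempty
  · simp only [hempty, card_empty, zero_le]
  simp only [mem_filter] at hw
  obtain ⟨⟨hw, hfst⟩, rfl⟩ := hw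
  have hsnd := hfst ∘ (sq_eq_sq_iff_of_mem_solutionPairs hNq h₁ h₂ hw).mpr
  obtain ⟨hmN, hlN, -⟩ := mem_congruencePairs.mp hb
  calc _ ≤ #{x ∈ solutionPairs N q β₁ β₂ β₃ | sqDiffs x = sqDiffs w} :=
        card_le_card (filter_subset_filter _ (filter_subset _ _))
    _ ≤ 8 * (#(sqDiffs w).1.natAbs.divisors * #(sqDiffs w).2.natAbs.divisors) :=
        card_filter_sqDiffs_eq_le hNq h₃ (sub_ne_zero.mpr hfst) (sub_ne_zero.mpr hsnd)
    _ ≤ 8 * (K * K) := by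
        gcongr
        exacts [hdiv hmN, hdiv hlN]
    _ = 8 * K ^ 2 := by rw [sq]

theorem sq_card_solutionTriples_le {γ : ℤ} {K : ℕ} (hNq : N ^ 2 < q)
    (h₁ : IsCoprime (q : ℤ) β₁) (h₂ : IsCoprime (q : ℤ) β₂) (h₃ : IsCoprime (q : ℤ) β₃)
    (hγ : (q : ℤ) ∣ γ * β₂ - β₁) (hK : ∀ k ≤ N ^ 2, #k.divisors ≤ K) :
    #(solutionTriples N q β₁ β₂ β₃) ^ 2 ≤ (2 * N + 1) *
      (4 * #(solutionTriples N q β₁ β₂ β₃) +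
        8 * K ^ 2 * #(congruencePairs (N ^ 2) (N ^ 2) q γ)) := by
  refine sq_card_solutionTriples_le_mul_card_solutionPairs.trans (Nat.mul_le_mul_left _ ?_)
  rw [← card_filter_add_card_filter_not (s := solutionPairs N q β₁ β₂ β₃)
    fun x => x.1.1 ^ 2 = x.2.1 ^ 2]
  exact add_le_add (card_filter_solutionPairs_sq_eq_le hNq h₁ h₂)
    (card_filter_solutionPairs_sq_ne_le hNq h₁ h₂ h₃ hγ hK)

end SolutionPairs

/-! ### The bound in terms of the rational approximation -/

/-- The size `M^(5/2) q^(-1/2) + r^(1/2) M^(3/2) q^(-1/2) + M^(3/2) r^(-1/2) + M` of the bound for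
the number of solutions of height `M` modulo `q`, given a rational approximation with
denominator `r`. -/
noncomputable def approximationBound (M r q : ℝ) : ℝ :=
  M ^ ((5 : ℝ) / 2) / q ^ ((1 : ℝ) / 2) +
    r ^ ((1 : ℝ) / 2) * M ^ ((3 : ℝ) / 2) / q ^ ((1 : ℝ) / 2) +
    M ^ ((3 : ℝ) / 2) / r ^ ((1 : ℝ) / 2) + M

section ApproximationBound

variable {M r q : ℝ}

theorem le_approximationBound (hM : 0 ≤ M) (hr : 0 ≤ r) (hq : 0 ≤ q) :
    M ≤ approximationBound M r q :=
  le_add_of_nonneg_left (by positivity)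

theorem approximationBound_mono_left {M' : ℝ} (hM : 0 ≤ M) (hr : 0 ≤ r) (hq : 0 ≤ q)
    (hMM' : M ≤ M') : approximationBound M r q ≤ approximationBound M' r q := by
  unfold approximationBound
  gcongr

theorem mul_add_one_mul_add_one_le_sq_approximationBound (hM : 1 ≤ M) (hr : 0 < r) (hq : 0 < q) :
    M * ((M ^ 2 / r + 1) * (r * M ^ 2 / q + 1)) ≤ approximationBound M r q ^ 2 := by
  have hM0 : 0 ≤ M := by linarith
  have rpow_half_sq {x : ℝ} (hx : 0 ≤ x) (k : ℕ) [k.AtLeastTwo] :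
      (x ^ ((ofNat(k) : ℝ) / 2)) ^ 2 = x ^ k := by
    rw [← Real.rpow_mul_natCast hx, Nat.cast_two, div_mul_cancel₀ _ two_ne_zero]
    exact Real.rpow_natCast x k
  have rpow_one_half_sq {x : ℝ} (hx : 0 ≤ x) : (x ^ ((1 : ℝ) / 2)) ^ 2 = x := by
    rw [← Real.sqrt_eq_rpow, Real.sq_sqrt hx]
  unfold approximationBound
  set A := M ^ ((5 : ℝ) / 2) / q ^ ((1 : ℝ) / 2) with hA_def
  set B := r ^ ((1 : ℝ) / 2) * M ^ ((3 : ℝ) / 2) / q ^ ((1 : ℝ) / 2) with hB_def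
  set C := M ^ ((3 : ℝ) / 2) / r ^ ((1 : ℝ) / 2) with hC_def
  have hA : A ^ 2 = M ^ 5 / q := by
    rw [hA_def, div_pow, rpow_half_sq hM0 5, rpow_one_half_sq hq.le]
  have hB : B ^ 2 = r * M ^ 3 / q := by
    rw [hB_def, div_pow, mul_pow, rpow_half_sq hM0 3, rpow_one_half_sq hr.le,
      rpow_one_half_sq hq.le]
  have hC : C ^ 2 = M ^ 3 / r := by
    rw [hC_def, div_pow, rpow_half_sq hM0 3, rpow_one_half_sq hr.le]
  have hcross : 0 ≤ A * B + A * C + A * M + B * C + B * M + C * M := by positivity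
  calc M * ((M ^ 2 / r + 1) * (r * M ^ 2 / q + 1)) = A ^ 2 + B ^ 2 + C ^ 2 + M := by
        rw [hA, hB, hC]
        field_simp
        ring
    _ ≤ A ^ 2 + B ^ 2 + C ^ 2 + M ^ 2 := by
        gcongr
        exact le_self_pow₀ hM two_ne_zero
    _ ≤ (A + B + C + M) ^ 2 := by linarith

end ApproximationBound

theorem le_two_mul_of_sq_le_mul_add_sq {R : Type*} [CommRing R] [LinearOrder R]
    [IsStrictOrderedRing R] {S Z : R} (hZ : 0 ≤ Z) (h : S ^ 2 ≤ Z * S + Z ^ 2) : S ≤ 2 * Z := by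
  by_contra! hlt
  nlinarith

theorem card_solutionTriples_le_mul_approximationBound {N q r K : ℕ} {β₁ β₂ β₃ γ a : ℤ}
    (hN : 1 ≤ N) (hNq : N ^ 2 < q) (h₁ : IsCoprime (q : ℤ) β₁) (h₂ : IsCoprime (q : ℤ) β₂)
    (h₃ : IsCoprime (q : ℤ) β₃) (hγ : (q : ℤ) ∣ γ * β₂ - β₁) (hr : 0 < r)
    (hcop : IsCoprime (r : ℤ) a) (happ : |(γ : ℝ) / q - a / r| ≤ 1 / (r : ℝ) ^ 2)
    (hK : ∀ k ≤ N ^ 2, #k.divisors ≤ K) :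
    (#(solutionTriples N q β₁ β₂ β₃) : ℝ) ≤ 24 * (K * approximationBound N r q) := by
  have hq : 0 < q := (Nat.zero_le _).trans_lt hNq
  have hrR : (0 : ℝ) < r := by exact_mod_cast hr
  have hqR : (0 : ℝ) < q := by exact_mod_cast hq
  have hNR : (1 : ℝ) ≤ N := by exact_mod_cast hN
  have hKR : (1 : ℝ) ≤ K := by
    exact_mod_cast (by simpa using hK 1 (Nat.one_le_pow _ _ hN) : 1 ≤ K)
  set S : ℝ := ((#(solutionTriples N q β₁ β₂ β₃) : ℕ) : ℝ)
  set P : ℝ := ((#(congruencePairs (N ^ 2) (N ^ 2) q γ) : ℕ) : ℝ)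
  set T : ℝ := approximationBound N r q
  have hNT : N ≤ T := le_approximationBound (Nat.cast_nonneg N) hrR.le hqR.le
  have hT : 0 ≤ T := (Nat.cast_nonneg N).trans hNT
  have hNKT : N ≤ K * T := hNT.trans (le_mul_of_one_le_left hT hKR)
  have hP : P ≤ 6 * (((N : ℝ) ^ 2 / r + 1) * (r * N ^ 2 / q + 1)) := by
    refine (card_congruencePairs_le hq hr hcop happ).trans ?_
    push_cast
    calc (2 * (N : ℝ) ^ 2 / r + 2) * (2 * r * N ^ 2 / q + 3)
        ≤ (2 * (N : ℝ) ^ 2 / r + 2) * (3 * r * N ^ 2 / q + 3) := by gcongr; norm_num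
      _ = 6 * (((N : ℝ) ^ 2 / r + 1) * (r * N ^ 2 / q + 1)) := by ring
  have hquadratic : S ^ 2 ≤ (12 * (K * T)) * S + (12 * (K * T)) ^ 2 :=
    calc S ^ 2 ≤ (2 * N + 1) * (4 * S + 8 * K ^ 2 * P) := by
          simp only [S, P]
          exact_mod_cast sq_card_solutionTriples_le hNq h₁ h₂ h₃ hγ hK
      _ ≤ (3 * N) * (4 * S + 8 * K ^ 2 * (6 * (((N : ℝ) ^ 2 / r + 1) * (r * N ^ 2 / q + 1)))) := by
          gcongr
          linarith
      _ = 12 * N * S +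
            144 * K ^ 2 * (N * (((N : ℝ) ^ 2 / r + 1) * (r * N ^ 2 / q + 1))) := by ring
      _ ≤ 12 * (K * T) * S + 144 * K ^ 2 * T ^ 2 := by
          gcongr
          exact mul_add_one_mul_add_one_le_sq_approximationBound hNR hrR hqR
      _ = (12 * (K * T)) * S + (12 * (K * T)) ^ 2 := by ring
  linarith [le_two_mul_of_sq_le_mul_add_sq (by positivity) hquadratic]

theorem sigmaCount_le_card_solutionTriples (p : ℕ) (β₁ β₂ β₃ : ℤ) {M : ℝ} (hM : 0 ≤ M) (q : ℕ) :
    sigmaCount p β₁ β₂ β₃ M q ≤ #(solutionTriples ⌊M⌋₊ q β₁ β₂ β₃) := by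
  have abs_le_floor {z : ℤ} (hz : ((|z| : ℤ) : ℝ) ≤ M) : |z| ≤ (⌊M⌋₊ : ℤ) := by
    rw [Int.natCast_floor_eq_floor hM]
    exact Int.le_floor.mpr hz
  rw [sigmaCount, Nat.card_coe_set_eq, ← Set.ncard_coe_finset]
  refine Set.ncard_le_ncard (fun x hx => ?_) (finite_toSet _)
  obtain ⟨hx₁, hx₂, hx₃, -, hdvd⟩ := hx
  exact mem_solutionTriples.mpr
    ⟨abs_le_floor hx₁, abs_le_floor hx₂, abs_le_floor hx₃, hdvd⟩

theorem sq_lt_of_le_rpow_half_sub {x y ε : ℝ} (hx : 0 ≤ x) (hy : 1 < y) (hε : 0 < ε)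
    (h : x ≤ y ^ ((1 : ℝ) / 2 - ε)) : x ^ 2 < y := by
  rw [← Real.lt_sqrt hx, Real.sqrt_eq_rpow]
  exact h.trans_lt (Real.rpow_lt_rpow_of_exponent_lt hy (by linarith))

theorem isCoprime_natCast_pow_of_not_dvd {p : ℕ} (hp : p.Prime) {β : ℤ} (hβ : ¬ (p : ℤ) ∣ β)
    (n : ℕ) : IsCoprime ((p ^ n : ℕ) : ℤ) β := by
  rw [Nat.cast_pow]
  exact ((Nat.prime_iff_prime_int.mp hp).coprime_iff_not_dvd.mpr hβ).pow_left

theorem sigma_bound_rational_approximation_general {ε : ℝ} (hε : 0 < ε) :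
    ∃ C : ℝ, 0 < C ∧ ∀ (M : ℝ) (q : ℕ), 1 ≤ M → M ^ 2 < q → ∀ (β₁ β₂ β₃ : ℤ),
      IsCoprime (q : ℤ) β₁ → IsCoprime (q : ℤ) β₂ → IsCoprime (q : ℤ) β₃ →
      ∀ γ : ℤ, (q : ℤ) ∣ γ * β₂ - β₁ →
      ∀ (a : ℤ) (r : ℕ), 0 < r → IsCoprime (r : ℤ) a →
        |(γ : ℝ) / q - a / r| ≤ 1 / (r : ℝ) ^ 2 →
        (#(solutionTriples ⌊M⌋₊ q β₁ β₂ β₃) : ℝ) ≤ C * approximationBound M r q * M ^ ε := by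
  obtain ⟨C, hC, hdiv⟩ := exists_card_divisors_le_rpow (half_pos hε)
  refine ⟨24 * C, by positivity, fun M q hM hMq β₁ β₂ β₃ h₁ h₂ h₃ γ hγ a r hr hcop happ => ?_⟩
  have hM0 : 0 ≤ M := zero_le_one.trans hM
  have hNM : (⌊M⌋₊ : ℝ) ≤ M := Nat.floor_le hM0
  have hNM_sq : (⌊M⌋₊ : ℝ) ^ 2 ≤ M ^ 2 := by gcongr
  have hNq : ⌊M⌋₊ ^ 2 < q := by exact_mod_cast hNM_sq.trans_lt hMq
  have hK (k : ℕ) (hkN : k ≤ ⌊M⌋₊ ^ 2) : #k.divisors ≤ ⌊C * M ^ ε⌋₊ := by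
    refine Nat.le_floor ((hdiv k).trans ?_)
    calc C * (k : ℝ) ^ (ε / 2) ≤ C * (M ^ 2) ^ (ε / 2) := by
          gcongr
          exact le_trans (by exact_mod_cast hkN) hNM_sq
      _ = C * M ^ ε := by
          rw [← Real.rpow_natCast_mul hM0, Nat.cast_two, mul_div_cancel₀ _ two_ne_zero]
  have hbound : 0 ≤ approximationBound ⌊M⌋₊ r q :=
    (Nat.cast_nonneg _).trans
      (le_approximationBound (Nat.cast_nonneg _) r.cast_nonneg q.cast_nonneg)
  calc (#(solutionTriples ⌊M⌋₊ q β₁ β₂ β₃) : ℝ)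
      ≤ 24 * (⌊C * M ^ ε⌋₊ * approximationBound ⌊M⌋₊ r q) :=
        card_solutionTriples_le_mul_approximationBound (Nat.le_floor (by exact_mod_cast hM)) hNq
          h₁ h₂ h₃ hγ hr hcop happ hK
    _ ≤ 24 * (C * M ^ ε * approximationBound M r q) := by
        gcongr
        · exact Nat.floor_le (by positivity)
        · exact approximationBound_mono_left (Nat.cast_nonneg _) r.cast_nonneg q.cast_nonneg hNM
    _ = 24 * C * approximationBound M r q * M ^ ε := by ring

/-- A bound for `Σ_{β₁,β₂,β₃}(M,q)` in terms of a rational approximation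
`a/r` to `β₁β₂⁻¹/q`. -/
theorem sigma_bound_rational_approximation (ε : ℝ) (hε : 0 < ε) :
    ∃ Cε : ℝ, 0 < Cε ∧
      ∀ (p : ℕ), p.Prime → Odd p → ∀ (n : ℕ), 1 ≤ n → ∀ (β₁ β₂ β₃ : ℤ),
        ¬ (p : ℤ) ∣ β₁ → ¬ (p : ℤ) ∣ β₂ → ¬ (p : ℤ) ∣ β₃ →
        ∀ M : ℝ, 1 ≤ M → M ≤ ((p : ℝ) ^ n) ^ ((1 : ℝ) / 2 - ε) →
        ∀ γ : ℤ, ((p : ℤ) ^ n ∣ γ * β₂ - β₁) →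
        ∀ (a : ℤ) (r : ℕ), 0 < r → Int.gcd a r = 1 →
          |(γ : ℝ) / (p : ℝ) ^ n - (a : ℝ) / (r : ℝ)| ≤ 1 / (r : ℝ) ^ 2 →
          (sigmaCount p β₁ β₂ β₃ M (p ^ n) : ℝ) ≤
            Cε * (M ^ ((5 : ℝ) / 2) / ((p : ℝ) ^ n) ^ ((1 : ℝ) / 2) +
              (r : ℝ) ^ ((1 : ℝ) / 2) * M ^ ((3 : ℝ) / 2) / ((p : ℝ) ^ n) ^ ((1 : ℝ) / 2) +
              M ^ ((3 : ℝ) / 2) / (r : ℝ) ^ ((1 : ℝ) / 2) + M) *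
              ((r : ℝ) * M * (p : ℝ) ^ n) ^ ε := by
  obtain ⟨C, hC, hbound⟩ := sigma_bound_rational_approximation_general hε
  refine ⟨C, hC, fun p hp _ n hn β₁ β₂ β₃ h₁ h₂ h₃ M hM hMq γ hγ a r hr hcop happ => ?_⟩
  have hM0 : 0 ≤ M := zero_le_one.trans hM
  have hr1 : (1 : ℝ) ≤ r := by exact_mod_cast hr
  have hq1 : (1 : ℝ) < (p : ℝ) ^ n := one_lt_pow₀ (by exact_mod_cast hp.one_lt) (by omega)
  have hMq' : M ^ 2 < (p : ℝ) ^ n := sq_lt_of_le_rpow_half_sub hM0 hq1 hε hMq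
  have hM_le : M ≤ r * M * p ^ n :=
    (le_mul_of_one_le_left hM0 hr1).trans (le_mul_of_one_le_right (by positivity) hq1.le)
  have hcoprime {β : ℤ} (hβ : ¬ (p : ℤ) ∣ β) := isCoprime_natCast_pow_of_not_dvd hp hβ n
  have hcount := hbound M (p ^ n) hM (by exact_mod_cast hMq') β₁ β₂ β₃ (hcoprime h₁) (hcoprime h₂)
    (hcoprime h₃) γ (by exact_mod_cast hγ) a r hr (Int.isCoprime_iff_gcd_eq_one.mpr hcop).symm
    (by exact_mod_cast happ)
  rw [Nat.cast_pow] at hcount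
  calc (sigmaCount p β₁ β₂ β₃ M (p ^ n) : ℝ)
      ≤ #(solutionTriples ⌊M⌋₊ (p ^ n) β₁ β₂ β₃) := by
        exact_mod_cast sigmaCount_le_card_solutionTriples p β₁ β₂ β₃ hM0 (p ^ n)
    _ ≤ C * approximationBound M r (p ^ n) * M ^ ε := hcount
    _ ≤ C * approximationBound M r (p ^ n) * (r * M * p ^ n) ^ ε := by
        have := hM0.trans (le_approximationBound hM0 r.cast_nonneg (zero_le_one.trans hq1.le))
        gcongr
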